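/- Let R be a commutative ring, M an R-module, and C an R-linear relation on M. There is a well-defined R-module automorphism θ of C^♯/C^♭ determined by: θ(m + C^♭) = m' + C^♭ if and only if m' ∈ C^♯ ∩ (C^♭ + Cm). -/

import Mathlib

variable {R : Type*} [CommRing R] {M : Type*} [AddCommGroup M] [Module R M]

/-- The inverse of a linear relation `C ⊆ M ⊕ M`. -/
def relInv (C : Submodule R (M × M)) : Submodule R (M × M) :=
  C.comap (LinearEquiv.prodComm R M M).toLinearMap

/-- `C'' = {m : ∃ (mₙ), m₀ = m and mₙ₊₁ ∈ Cmₙ for all n}`. -/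
def relDD (C : Submodule R (M × M)) : Set M :=
  {m | ∃ f : ℕ → M, f 0 = m ∧ ∀ n, (f n, f (n + 1)) ∈ C}

/-- `C' = {m : ∃ (mₙ), m₀ = m, mₙ₊₁ ∈ Cmₙ for all n, and mₙ = 0 for n ≫ 0}`. -/
def relD (C : Submodule R (M × M)) : Set M :=
  {m | ∃ f : ℕ → M, f 0 = m ∧ (∀ n, (f n, f (n + 1)) ∈ C) ∧ ∃ N, ∀ n, N ≤ n → f n = 0}

/-- `C^♯ = C'' ∩ (C⁻¹)''`. -/
def relSharp (C : Submodule R (M × M)) : Set M :=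
  relDD C ∩ relDD (relInv C)

/-- `C^♭ = C'' ∩ (C⁻¹)' + (C⁻¹)'' ∩ C'`. -/
def relFlat (C : Submodule R (M × M)) : Set M :=
  {m | ∃ a ∈ relDD C ∩ relD (relInv C), ∃ b ∈ relDD (relInv C) ∩ relD C, m = a + b}

theorem mem_relInv {C : Submodule R (M × M)} {x y : M} :
    (x, y) ∈ relInv C ↔ (y, x) ∈ C := Iff.rfl

theorem relSharp_relInv (C : Submodule R (M × M)) : relSharp (relInv C) = relSharp C :=
  Set.inter_comm _ _

theorem relFlat_relInv (C : Submodule R (M × M)) : relFlat (relInv C) = relFlat C := by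
  ext m
  constructor
  all_goals
    rintro ⟨a, ha, b, hb, rfl⟩
    exact ⟨b, hb, a, ha, add_comm a b⟩

theorem mem_relDD_of_rel {C : Submodule R (M × M)} {x y : M} (h : (x, y) ∈ C)
    (hy : y ∈ relDD C) : x ∈ relDD C := by
  obtain ⟨f, rfl, hf⟩ := hy
  exact ⟨fun n => n.casesOn x f, rfl, fun n => by cases n with
    | zero => exact h
    | succ n => exact hf n⟩

theorem mem_relD_of_rel {C : Submodule R (M × M)} {x y : M} (h : (x, y) ∈ C)
    (hy : y ∈ relD C) : x ∈ relD C := by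
  obtain ⟨f, rfl, hf, N, hN⟩ := hy
  refine ⟨fun n => n.casesOn x f, rfl, fun n => ?_, N + 1, fun n hn => ?_⟩
  · cases n with
    | zero => exact h
    | succ n => exact hf n
  · cases n with
    | zero => omega
    | succ n => exact hN n (by omega)

theorem exists_rel_of_mem_relDD {C : Submodule R (M × M)} {x : M} (hx : x ∈ relDD C) :
    ∃ y ∈ relDD C, (x, y) ∈ C := by
  obtain ⟨f, rfl, hf⟩ := hx
  exact ⟨f 1, ⟨fun n => f (n + 1), rfl, fun n => hf (n + 1)⟩, hf 0⟩

theorem exists_rel_of_mem_relD {C : Submodule R (M × M)} {x : M} (hx : x ∈ relD C) :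
    ∃ y ∈ relD C, (x, y) ∈ C := by
  obtain ⟨f, rfl, hf, N, hN⟩ := hx
  exact ⟨f 1, ⟨fun n => f (n + 1), rfl, fun n => hf (n + 1), N, fun n hn => hN _ (by omega)⟩,
    hf 0⟩

theorem relD_subset_relDD (C : Submodule R (M × M)) : relD C ⊆ relDD C :=
  fun _ ⟨f, h0, hf, _⟩ => ⟨f, h0, hf⟩

theorem zero_mem_relD (C : Submodule R (M × M)) : (0 : M) ∈ relD C :=
  ⟨fun _ => 0, rfl, fun _ => C.zero_mem, 0, fun _ _ => rfl⟩

theorem zero_mem_relDD (C : Submodule R (M × M)) : (0 : M) ∈ relDD C :=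
  relD_subset_relDD C (zero_mem_relD C)

theorem mem_relFlat_left {C : Submodule R (M × M)} {a : M} (h : a ∈ relDD C)
    (h' : a ∈ relD (relInv C)) : a ∈ relFlat C :=
  ⟨a, ⟨h, h'⟩, 0, ⟨zero_mem_relDD _, zero_mem_relD _⟩, (add_zero a).symm⟩

theorem mem_relFlat_right {C : Submodule R (M × M)} {b : M} (h : b ∈ relDD (relInv C))
    (h' : b ∈ relD C) : b ∈ relFlat C :=
  ⟨0, ⟨zero_mem_relDD _, zero_mem_relD _⟩, b, ⟨h, h'⟩, (zero_add b).symm⟩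

theorem exists_rel_of_mem_relSharp {C : Submodule R (M × M)} {x : M} (hx : x ∈ relSharp C) :
    ∃ y ∈ relSharp C, (x, y) ∈ C := by
  obtain ⟨y, hy, hxy⟩ := exists_rel_of_mem_relDD hx.1
  exact ⟨y, ⟨hy, mem_relDD_of_rel (mem_relInv.2 hxy) hx.2⟩, hxy⟩

/-- The inclusion `C^♯ ∩ CC^♭ ⊆ C^♭`. -/
theorem mem_of_rel_of_mem_relFlat {C : Submodule R (M × M)} {Sharp Flat : Submodule R M}
    (hS : (Sharp : Set M) = relSharp C) (hF : (Flat : Set M) = relFlat C) (hle : Flat ≤ Sharp)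
    {x y : M} (hxy : (x, y) ∈ C) (hx : x ∈ Flat) (hy : y ∈ Sharp) : y ∈ Flat := by
  have hS' : ∀ z, z ∈ Sharp ↔ z ∈ relSharp C := Set.ext_iff.1 hS
  have hF' : ∀ z, z ∈ Flat ↔ z ∈ relFlat C := Set.ext_iff.1 hF
  obtain ⟨a, ⟨ha, ha'⟩, b, ⟨hb, hb'⟩, rfl⟩ := (hF' _).1 hx
  obtain ⟨a₁, ha₁, haa⟩ := exists_rel_of_mem_relDD ha
  obtain ⟨b₁, hb₁, hbb⟩ := exists_rel_of_mem_relD hb'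
  have hsum : a₁ + b₁ ∈ Flat := Flat.add_mem
    ((hF' _).2 (mem_relFlat_left ha₁ (mem_relD_of_rel (mem_relInv.2 haa) ha')))
    ((hF' _).2 (mem_relFlat_right (mem_relDD_of_rel (mem_relInv.2 hbb) hb) hb₁))
  have hC : ((0 : M), y - (a₁ + b₁)) ∈ C := by
    simpa using C.sub_mem hxy (C.add_mem haa hbb)
  have hdiff : y - (a₁ + b₁) ∈ Flat := (hF' _).2 (mem_relFlat_left
    ((hS' _).1 (Sharp.sub_mem hy (hle hsum))).1
    (mem_relD_of_rel (mem_relInv.2 hC) (zero_mem_relD _)))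
  simpa using Flat.add_mem hdiff hsum

/-- there is a well-defined `R`-module automorphism `θ` of `C^♯/C^♭`
determined by `θ(m + C^♭) = m' + C^♭` iff `m' ∈ C^♯ ∩ (C^♭ + Cm)`. -/
theorem stmt3 (C : Submodule R (M × M))
    (Sharp Flat : Submodule R M)
    (hS : (Sharp : Set M) = relSharp C) (hF : (Flat : Set M) = relFlat C)
    (hle : Flat ≤ Sharp) :
    ∃ θ : (↥Sharp ⧸ Flat.comap Sharp.subtype) ≃ₗ[R] (↥Sharp ⧸ Flat.comap Sharp.subtype),
      ∀ m m' : Sharp,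
        (θ (Submodule.Quotient.mk m) = Submodule.Quotient.mk m' ↔
          ((m' : M) ∈ relSharp C ∧
            ∃ a ∈ relFlat C, ∃ b : M, ((m : M), b) ∈ C ∧ (m' : M) = a + b)) := by
  have hS' : ∀ z, z ∈ Sharp ↔ z ∈ relSharp C := Set.ext_iff.1 hS
  have hF' : ∀ z, z ∈ Flat ↔ z ∈ relFlat C := Set.ext_iff.1 hF
  let D : Submodule R (Sharp × Sharp) := C.comap (Sharp.subtype.prodMap Sharp.subtype)
  let Q := Flat.comap Sharp.subtype
  let p₁ : D →ₗ[R] Sharp ⧸ Q := Q.mkQ ∘ₗ LinearMap.fst R Sharp Sharp ∘ₗ D.subtype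
  let p₂ : D →ₗ[R] Sharp ⧸ Q := Q.mkQ ∘ₗ LinearMap.snd R Sharp Sharp ∘ₗ D.subtype
  have exists_right (m : Sharp) : ∃ b : Sharp, ((m : M), (b : M)) ∈ C := by
    obtain ⟨b, hb, hmb⟩ := exists_rel_of_mem_relSharp ((hS' _).1 m.2)
    exact ⟨⟨b, (hS' _).2 hb⟩, hmb⟩
  have exists_left (m : Sharp) : ∃ b : Sharp, ((b : M), (m : M)) ∈ C := by
    obtain ⟨b, hb, hmb⟩ := exists_rel_of_mem_relSharp
      ((relSharp_relInv C).symm ▸ (hS' _).1 m.2)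
    exact ⟨⟨b, (hS' _).2 (relSharp_relInv C ▸ hb)⟩, hmb⟩
  have hp₁ : Function.Surjective p₁ := fun q => by
    obtain ⟨m, rfl⟩ := Q.mkQ_surjective q
    obtain ⟨b, hb⟩ := exists_right m
    exact ⟨⟨(m, b), hb⟩, rfl⟩
  have hp₂ : Function.Surjective p₂ := fun q => by
    obtain ⟨m, rfl⟩ := Q.mkQ_surjective q
    obtain ⟨b, hb⟩ := exists_left m
    exact ⟨⟨(b, m), hb⟩, rfl⟩
  have hker : LinearMap.ker p₁ = LinearMap.ker p₂ := by
    ext ⟨⟨m, b⟩, hmb⟩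
    change Q.mkQ m = 0 ↔ Q.mkQ b = 0
    rw [Submodule.mkQ_apply, Submodule.mkQ_apply, Submodule.Quotient.mk_eq_zero,
      Submodule.Quotient.mk_eq_zero]
    exact ⟨fun h => mem_of_rel_of_mem_relFlat hS hF hle hmb h b.2,
      fun h => mem_of_rel_of_mem_relFlat (hS.trans (relSharp_relInv C).symm)
        (hF.trans (relFlat_relInv C).symm) hle (mem_relInv.2 hmb) h m.2⟩
  let θ := (p₁.quotKerEquivOfSurjective hp₁).symm ≪≫ₗ Submodule.quotEquivOfEq _ _ hker ≪≫ₗ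
    p₂.quotKerEquivOfSurjective hp₂
  have hθ (m b : Sharp) (h : ((m : M), (b : M)) ∈ C) : θ (Q.mkQ m) = Q.mkQ b := by
    let d : D := ⟨(m, b), h⟩
    have hd : (p₁.quotKerEquivOfSurjective hp₁).symm (Q.mkQ m) = Submodule.Quotient.mk d :=
      (LinearEquiv.symm_apply_eq _).2 rfl
    simp only [θ, LinearEquiv.trans_apply, hd]
    rfl
  refine ⟨θ, fun m m' => ⟨fun h => ⟨(hS' _).1 m'.2, ?_⟩, ?_⟩⟩
  · obtain ⟨b, hb⟩ := exists_right m
    have hq : Q.mkQ m' = Q.mkQ b := h.symm.trans (hθ m b hb)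
    exact ⟨m' - b, (hF' _).1 ((Submodule.Quotient.eq Q).1 hq), b, hb, (sub_add_cancel _ _).symm⟩
  · rintro ⟨-, a, ha, b, hb, hab⟩
    have haF : a ∈ Flat := (hF' a).2 ha
    have hba : b = m' - a := by rw [hab, add_sub_cancel_left]
    have hbS : b ∈ Sharp := hba ▸ Sharp.sub_mem m'.2 (hle haF)
    refine (hθ m ⟨b, hbS⟩ hb).trans ((Submodule.Quotient.eq Q).2 ?_)
    change b - (m' : M) ∈ Flat
    rw [hba, sub_sub_cancel_left]
    exact Flat.neg_mem haF
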